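/- arXiv:2605.20527 — 2 statements merged into one kernel-verified Lean document; each statement's English description precedes it below -/
import Mathlib

section
/- For every real r ≥ 0, one has ∫_{S¹} ρ(r e^{iθ})² dσ(θ) ≥ r²/8, where dσ = dθ/(2π) is the probability Haar measure on the circle. -/
open MeasureTheory

/-- The defect function `ρ(w) = ||1+w| − 1|`. -/
noncomputable def ρ (w : ℂ) : ℝ := |‖1 + w‖ - 1|

/-- Average over the circle with respect to the probability Haar measure `dσ = dθ/(2π)`. -/
noncomputable def circleAvg (f : ℝ → ℝ) : ℝ :=
  (1 / (2 * Real.pi)) * ∫ t in (0 : ℝ)..(2 * Real.pi), f t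

/-! Since `‖1 + w‖ + 1 ≤ ‖w‖ + 2`, factoring the difference of squares
`‖1 + w‖² - 1 = ‖w‖² + 2 Re w` gives `|‖w‖² + 2 Re w| ≤ (‖w‖ + 2) ρ(w)`. Squaring and averaging
over the circle `‖w‖ = r`, where `Re w` has mean `0` and `(Re w)²` has mean `r² / 2`, bounds the
average of `ρ²` below by `r² (r² + 2) / (r + 2)²`. This is at least `r² / 3`, because
`3 (r² + 2) - (r + 2)² = 2 (r - 1)² ≥ 0`. -/

@[fun_prop]
theorem continuous_ρ : Continuous ρ := by
  unfold ρ
  fun_prop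

theorem abs_norm_sq_add_two_mul_re_le_mul_ρ (w : ℂ) :
    |‖w‖ ^ 2 + 2 * w.re| ≤ (‖w‖ + 2) * ρ w := by
  have norm_sq : ‖1 + w‖ ^ 2 = 1 + 2 * w.re + ‖w‖ ^ 2 := by
    simpa [Complex.inner] using norm_add_sq_real 1 w
  have norm_le : ‖1 + w‖ ≤ 1 + ‖w‖ := by
    simpa using norm_add_le 1 w
  calc |‖w‖ ^ 2 + 2 * w.re|
      = |(‖1 + w‖ + 1) * (‖1 + w‖ - 1)| := by
        congr 1
        linear_combination -norm_sq
    _ = (‖1 + w‖ + 1) * ρ w := by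
        rw [abs_mul, abs_of_nonneg (by positivity), ρ]
    _ ≤ (‖w‖ + 2) * ρ w :=
        mul_le_mul_of_nonneg_right (by linarith) (abs_nonneg _)

theorem circleAvg_comp_exp_mul_I (f : ℂ → ℝ) :
    circleAvg (fun θ => f (Complex.exp (θ * Complex.I))) = Real.circleAverage f 0 1 := by
  simp [circleAvg, Real.circleAverage, circleMap]

theorem circleAverage_add_re_mul_sq (a : ℝ) (w : ℂ) (R : ℝ) :
    Real.circleAverage (fun z => (a + (w * z).re) ^ 2) 0 R = a ^ 2 + ‖w‖ ^ 2 * R ^ 2 / 2 := by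
  -- On the circle, `(Re u)² = (‖u‖² + Re (u²)) / 2` turns the integrand into the real part of `g`.
  let g : ℂ → ℂ := fun z =>
    (a ^ 2 + ‖w‖ ^ 2 * R ^ 2 / 2 : ℝ) + (2 * a : ℝ) * (w * z) + (1 / 2 : ℝ) * (w * z) ^ 2
  have eqOn_sphere : Set.EqOn (fun z => (a + (w * z).re) ^ 2) (fun z => (g z).re)
      (Metric.sphere 0 |R|) := by
    intro z hz
    have norm_sq : (w * z).re ^ 2 + (w * z).im ^ 2 = ‖w‖ ^ 2 * R ^ 2 := by
      rw [← sq_abs R, ← mem_sphere_zero_iff_norm.mp hz, ← mul_pow, ← norm_mul,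
        Complex.sq_norm, Complex.normSq_apply]
      ring
    have re_sq : ((w * z) ^ 2).re = (w * z).re ^ 2 - (w * z).im ^ 2 := by
      rw [sq (w * z), Complex.mul_re (w * z)]
      ring
    simp only [g, Complex.add_re, Complex.ofReal_re, Complex.re_ofReal_mul, re_sq]
    linear_combination norm_sq / 2
  have harmonic : InnerProductSpace.HarmonicOnNhd (fun z => (g z).re)
      (Metric.closedBall 0 |R|) :=
    fun z _ => AnalyticAt.harmonicAt_re (by fun_prop)
  rw [Real.circleAverage_congr_sphere eqOn_sphere, harmonic.circleAverage_eq]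
  simp only [g, mul_zero, zero_pow two_ne_zero, add_zero, Complex.ofReal_re]

theorem norm_sq_mul_div_le_circleAverage_ρ_sq (w : ℂ) :
    ‖w‖ ^ 2 * (‖w‖ ^ 2 + 2) / (‖w‖ + 2) ^ 2 ≤
      Real.circleAverage (fun z => ρ (w * z) ^ 2) 0 1 := by
  have pointwise : ∀ z ∈ Metric.sphere (0 : ℂ) |1|,
      (‖w‖ ^ 2 + (2 * w * z).re) ^ 2 ≤ (‖w‖ + 2) ^ 2 * ρ (w * z) ^ 2 := by
    intro z hz
    have norm_mul_eq : ‖w * z‖ = ‖w‖ := by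
      rw [norm_mul, mem_sphere_zero_iff_norm.mp hz, abs_one, mul_one]
    have re_two_mul : (2 * w * z).re = 2 * (w * z).re := by
      rw [mul_assoc, ← Complex.re_ofReal_mul, Complex.ofReal_ofNat]
    have bound := abs_norm_sq_add_two_mul_re_le_mul_ρ (w * z)
    rw [norm_mul_eq] at bound
    rw [← mul_pow, re_two_mul]
    exact sq_le_sq.mpr (bound.trans (le_abs_self _))
  rw [div_le_iff₀' (by positivity)]
  calc ‖w‖ ^ 2 * (‖w‖ ^ 2 + 2)
      = Real.circleAverage (fun z => (‖w‖ ^ 2 + (2 * w * z).re) ^ 2) 0 1 := by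
        rw [circleAverage_add_re_mul_sq, norm_mul, Complex.norm_ofNat]
        ring
    _ ≤ Real.circleAverage (fun z => (‖w‖ + 2) ^ 2 * ρ (w * z) ^ 2) 0 1 :=
        Real.circleAverage_mono (Continuous.continuousOn (by fun_prop)).circleIntegrable'
          (Continuous.continuousOn (by fun_prop)).circleIntegrable' pointwise
    _ = (‖w‖ + 2) ^ 2 * Real.circleAverage (fun z => ρ (w * z) ^ 2) 0 1 := by
        simp only [← smul_eq_mul ((‖w‖ + 2) ^ 2), Real.circleAverage_fun_smul]

theorem stmt9_general (w : ℂ) :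
    ‖w‖ ^ 2 / 3 ≤ circleAvg (fun θ => ρ (w * Complex.exp (θ * Complex.I)) ^ 2) := by
  rw [circleAvg_comp_exp_mul_I (fun z => ρ (w * z) ^ 2)]
  refine le_trans ?_ (norm_sq_mul_div_le_circleAverage_ρ_sq w)
  rw [le_div_iff₀ (by positivity)]
  linear_combination (2 / 3) * sq_nonneg (‖w‖ * (‖w‖ - 1))

/-- **Rotational averaging.** For every `r ≥ 0`,
`∫_{S¹} ρ(r e^{iθ})² dσ(θ) ≥ r²/8`. -/
theorem stmt9 (r : ℝ) (hr : 0 ≤ r) :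
    r ^ 2 / 8 ≤ circleAvg (fun θ => (ρ ((r : ℂ) * Complex.exp ((θ : ℂ) * Complex.I))) ^ 2) := by
  have bound := stmt9_general r
  rw [Complex.norm_real, Real.norm_eq_abs, sq_abs] at bound
  linarith [sq_nonneg r]
end

section
/- Let N ≥ 1 and L ≥ 1 be integers satisfying 1343 L² ≤ N². For any complex numbers b₀, …, b_{L−1}, the trigonometric polynomial P(t) = Σ_{m=0}^{L−1} b_m e^{i(N+m)t} satisfies ‖P‖_{L²(S¹)}² ≤ 32 ‖ρ ∘ P‖_{L²(S¹)}², where the L² norms are taken with respect to the probability Haar measure dσ = dt/(2π) on the circle. -/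
open MeasureTheory

/-!
The defect `ρ` vanishes on the circle `|1 + w| = 1`, but it cannot be small at all four points `w`,
`iw`, `-w`, `-iw`: the sum of its squares there is at least `(4/3)‖w‖²`. If the frequencies of `P`
lie within `ℓ` of `ω`, then translating `P` by `θ/ω` multiplies it by `e^{iθ}` up to an error of
`L²` norm at most `(ℓ|θ|/ω)‖P‖`. As `ρ` is 1-Lipschitz and the `L²` norm of `ρ ∘ P` is translation
invariant, the three nontrivial quarter turns `θ = ±π/2, π` give
`(4/3 - 3π²(ℓ/ω)²)‖P‖² ≤ 7‖ρ ∘ P‖²`.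
-/

open scoped Real

lemma lipschitzWith_ρ : LipschitzWith 1 ρ :=
  LipschitzWith.of_dist_le_mul fun z w => by
    calc dist (ρ z) (ρ w) ≤ |(‖1 + z‖ - 1) - (‖1 + w‖ - 1)| := abs_abs_sub_abs_le _ _
      _ = |‖1 + z‖ - ‖1 + w‖| := by rw [sub_sub_sub_cancel_right]
      _ ≤ ‖(1 + z) - (1 + w)‖ := abs_norm_sub_norm_le _ _
      _ = (1 : NNReal) * dist z w := by
        rw [add_sub_add_left_eq_sub, NNReal.coe_one, one_mul, dist_eq_norm]

lemma ρ_zero : ρ 0 = 0 := by simp [ρ]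

lemma ρ_sq_le_two_mul_add (z w : ℂ) : ρ z ^ 2 ≤ 2 * ρ w ^ 2 + 2 * ‖w - z‖ ^ 2 := by
  have hρ : |ρ z - ρ w| ≤ ‖w - z‖ := by
    simpa [Real.dist_eq, dist_eq_norm, norm_sub_rev] using lipschitzWith_ρ.dist_le_mul z w
  calc ρ z ^ 2 ≤ (ρ w + ‖w - z‖) ^ 2 :=
        pow_le_pow_left₀ (abs_nonneg _) (by linarith [le_of_abs_le hρ]) 2
    _ ≤ 2 * (ρ w ^ 2 + ‖w - z‖ ^ 2) := add_sq_le
    _ = 2 * ρ w ^ 2 + 2 * ‖w - z‖ ^ 2 := mul_add _ _ _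

lemma norm_one_add_sq (z : ℂ) : ‖1 + z‖ ^ 2 = 1 + 2 * z.re + ‖z‖ ^ 2 := by
  simp only [← Complex.normSq_eq_norm_sq, Complex.normSq_add, map_one, one_mul, Complex.conj_re]
  ring

lemma norm_sq_add_two_mul_re_sq_le (z : ℂ) :
    (‖z‖ ^ 2 + 2 * z.re) ^ 2 ≤ ρ z ^ 2 * (‖z‖ + 2) ^ 2 := by
  have hfactor : ‖z‖ ^ 2 + 2 * z.re = (‖1 + z‖ - 1) * (‖1 + z‖ + 1) := by
    linear_combination -norm_one_add_sq z
  have hnorm : ‖1 + z‖ + 1 ≤ ‖z‖ + 2 := by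
    linarith [norm_add_le (1 : ℂ) z, norm_one (α := ℂ)]
  rw [hfactor, mul_pow, ρ, sq_abs]
  gcongr

lemma four_thirds_mul_norm_sq_le_sum_ρ_sq (z : ℂ) :
    4 / 3 * ‖z‖ ^ 2 ≤
      ρ z ^ 2 + ρ (Complex.I * z) ^ 2 + ρ (-1 * z) ^ 2 + ρ (-Complex.I * z) ^ 2 := by
  have hpos : 0 < (‖z‖ + 2) ^ 2 := by positivity
  refine le_of_mul_le_mul_right ?_ hpos
  have h₁ := norm_sq_add_two_mul_re_sq_le z
  have h₂ := norm_sq_add_two_mul_re_sq_le (Complex.I * z)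
  have h₃ := norm_sq_add_two_mul_re_sq_le (-1 * z)
  have h₄ := norm_sq_add_two_mul_re_sq_le (-Complex.I * z)
  simp only [neg_mul, one_mul, norm_neg, norm_mul, Complex.norm_I, Complex.neg_re,
    Complex.I_mul_re, neg_neg] at h₁ h₂ h₃ h₄ ⊢
  have hnorm : ‖z‖ ^ 2 = z.re ^ 2 + z.im ^ 2 := by
    rw [← Complex.normSq_eq_norm_sq, Complex.normSq_apply, sq, sq]
  calc 4 / 3 * ‖z‖ ^ 2 * (‖z‖ + 2) ^ 2
      ≤ 4 * ‖z‖ ^ 4 + 8 * ‖z‖ ^ 2 := by nlinarith [mul_nonneg (sq_nonneg ‖z‖) (sq_nonneg (‖z‖ - 1))]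
    _ = (‖z‖ ^ 2 + 2 * z.re) ^ 2 + (‖z‖ ^ 2 + 2 * -z.im) ^ 2 + (‖z‖ ^ 2 + 2 * -z.re) ^ 2
          + (‖z‖ ^ 2 + 2 * z.im) ^ 2 := by linear_combination 8 * hnorm
    _ ≤ _ := by linarith

section SquareIntegrable

variable {X : Type*} [MeasurableSpace X] {μ : Measure X} {f g : X → ℂ}

lemma integrable_ρ_sq (hf : MemLp f 2 μ) : Integrable (fun x => ρ (f x) ^ 2) μ :=
  (lipschitzWith_ρ.comp_memLp ρ_zero hf).integrable_sq

lemma integral_ρ_sq_le_two_mul_add (hf : MemLp f 2 μ) (hg : MemLp g 2 μ) :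
    ∫ x, ρ (f x) ^ 2 ∂μ ≤ 2 * ∫ x, ρ (g x) ^ 2 ∂μ + 2 * ∫ x, ‖g x - f x‖ ^ 2 ∂μ := by
  have hρg := (integrable_ρ_sq hg).const_mul 2
  have hsub : Integrable (fun x => 2 * ‖g x - f x‖ ^ 2) μ :=
    ((hg.sub hf).norm.integrable_sq).const_mul 2
  rw [← integral_const_mul, ← integral_const_mul, ← integral_add hρg hsub]
  exact integral_mono (integrable_ρ_sq hf) (hρg.add hsub) fun x => ρ_sq_le_two_mul_add _ _

lemma four_thirds_mul_integral_norm_sq_le (hf : MemLp f 2 μ) :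
    4 / 3 * ∫ x, ‖f x‖ ^ 2 ∂μ ≤
      ∫ x, ρ (f x) ^ 2 ∂μ + ∫ x, ρ (Complex.I * f x) ^ 2 ∂μ + ∫ x, ρ (-1 * f x) ^ 2 ∂μ
        + ∫ x, ρ (-Complex.I * f x) ^ 2 ∂μ := by
  have hρ (u : ℂ) : Integrable (fun x => ρ (u * f x) ^ 2) μ := integrable_ρ_sq (hf.const_mul u)
  have hρ₂ : Integrable (fun x => ρ (f x) ^ 2 + ρ (Complex.I * f x) ^ 2) μ :=
    (integrable_ρ_sq hf).add (hρ _)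
  have hρ₃ : Integrable (fun x => ρ (f x) ^ 2 + ρ (Complex.I * f x) ^ 2 + ρ (-1 * f x) ^ 2) μ :=
    hρ₂.add (hρ _)
  rw [← integral_const_mul, ← integral_add (integrable_ρ_sq hf) (hρ _), ← integral_add hρ₂ (hρ _),
    ← integral_add hρ₃ (hρ _)]
  exact integral_mono (hf.norm.integrable_sq.const_mul _) (hρ₃.add (hρ _)) fun x =>
    four_thirds_mul_norm_sq_le_sum_ρ_sq (f x)

end SquareIntegrable

section TrigPoly

open AddCircle

variable {T : ℝ} {ι : Type*}

/-- The trigonometric polynomial with coefficients `c i` at the frequencies `ν i`, `i ∈ s`, as a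
continuous function on the circle of length `T`. The frequencies are indexed, rather than being
the elements of a finite set of integers, so that sums over `Finset.range` need no reindexing. -/
noncomputable def trigPoly (T : ℝ) (s : Finset ι) (ν : ι → ℤ) (c : ι → ℂ) : C(AddCircle T, ℂ) :=
  ∑ i ∈ s, c i • fourier (ν i)

variable {s : Finset ι} {ν : ι → ℤ} {c : ι → ℂ}

lemma trigPoly_apply (x : AddCircle T) :
    trigPoly T s ν c x = ∑ i ∈ s, c i * fourier (ν i) x := by
  simp [trigPoly]

lemma trigPoly_add_sub_mul (u : ℂ) (x y : AddCircle T) :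
    trigPoly T s ν c (x + y) - u * trigPoly T s ν c x =
      trigPoly T s ν (fun i => c i * (fourier (ν i) y - u)) x := by
  simp only [trigPoly_apply, Finset.mul_sum, ← Finset.sum_sub_distrib]
  refine Finset.sum_congr rfl fun i _ => ?_
  simp only [fourier_apply, zsmul_add, toCircle_add, Circle.coe_mul]
  ring

variable [hT : Fact (0 < T)]

lemma norm_fourier_sub_exp_le (n : ℤ) {ω : ℝ} (hω : ω ≠ 0) (θ : ℝ) :
    ‖fourier n ((θ / ω * (T / (2 * π)) : ℝ) : AddCircle T) - Complex.exp (θ * Complex.I)‖ ≤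
      |(n - ω) * (θ / ω)| := by
  have hω' : (ω : ℂ) ≠ 0 := Complex.ofReal_ne_zero.2 hω
  have hT' : (T : ℂ) ≠ 0 := Complex.ofReal_ne_zero.2 hT.out.ne'
  have hfactor : fourier n ((θ / ω * (T / (2 * π)) : ℝ) : AddCircle T) =
      Complex.exp (θ * Complex.I) * Complex.exp (Complex.I * ((n - ω) * (θ / ω) : ℝ)) := by
    rw [fourier_coe_apply, ← Complex.exp_add]
    congr 1
    push_cast
    field_simp
    ring
  rw [hfactor, ← mul_sub_one, norm_mul, Complex.norm_exp_ofReal_mul_I, one_mul]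
  exact Real.norm_exp_I_mul_ofReal_sub_one_le

lemma integral_norm_trigPoly_sq (hν : Function.Injective ν) :
    ∫ x, ‖trigPoly T s ν c x‖ ^ 2 ∂haarAddCircle = ∑ i ∈ s, ‖c i‖ ^ 2 := by
  have htoLp : (trigPoly T s ν c).toLp 2 haarAddCircle ℂ = ∑ i ∈ s, c i • fourierLp 2 (ν i) := by
    simp only [trigPoly, map_sum, map_smul]
  have hinner := ContinuousMap.inner_toLp haarAddCircle (trigPoly T s ν c) (trigPoly T s ν c)
  have horth := (orthonormal_fourier (T := T).comp ν hν).inner_sum c c s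
  simp only [Function.comp_apply] at horth
  rw [htoLp, horth] at hinner
  simp only [Complex.mul_conj', Complex.conj_mul'] at hinner
  exact_mod_cast hinner.symm

variable {y : AddCircle T} {u : ℂ} {δ : ℝ}

lemma integral_norm_trigPoly_add_sub_mul_sq_le (hν : Function.Injective ν)
    (hy : ∀ i ∈ s, ‖fourier (ν i) y - u‖ ≤ δ) :
    ∫ x, ‖trigPoly T s ν c (x + y) - u * trigPoly T s ν c x‖ ^ 2 ∂haarAddCircle ≤
      δ ^ 2 * ∫ x, ‖trigPoly T s ν c x‖ ^ 2 ∂haarAddCircle := by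
  simp only [trigPoly_add_sub_mul, integral_norm_trigPoly_sq hν, Finset.mul_sum]
  refine Finset.sum_le_sum fun i hi => ?_
  rw [norm_mul, mul_pow, mul_comm]
  gcongr
  exact hy i hi

lemma integral_ρ_mul_trigPoly_sq_le (hν : Function.Injective ν)
    (hy : ∀ i ∈ s, ‖fourier (ν i) y - u‖ ≤ δ) :
    ∫ x, ρ (u * trigPoly T s ν c x) ^ 2 ∂haarAddCircle ≤
      2 * ∫ x, ρ (trigPoly T s ν c x) ^ 2 ∂haarAddCircle +
        2 * (δ ^ 2 * ∫ x, ‖trigPoly T s ν c x‖ ^ 2 ∂haarAddCircle) := by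
  have hP : MemLp (trigPoly T s ν c) 2 haarAddCircle := (trigPoly T s ν c).memLp _ ℂ
  have htranslate : MemLp (fun x => trigPoly T s ν c (x + y)) 2 haarAddCircle :=
    hP.comp_measurePreserving (measurePreserving_add_right _ y)
  have hlip := integral_ρ_sq_le_two_mul_add (hP.const_mul u) htranslate
  rw [integral_add_right_eq_self (fun x => ρ (trigPoly T s ν c x) ^ 2) y] at hlip
  linarith [integral_norm_trigPoly_add_sub_mul_sq_le (c := c) hν hy]

theorem mul_integral_norm_trigPoly_sq_le (hν : Function.Injective ν) {ω ℓ : ℝ} (hω : ω ≠ 0)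
    (hνω : ∀ i ∈ s, |ν i - ω| ≤ ℓ) :
    (4 / 3 - 3 * π ^ 2 * (ℓ / ω) ^ 2) * ∫ x, ‖trigPoly T s ν c x‖ ^ 2 ∂haarAddCircle ≤
      7 * ∫ x, ρ (trigPoly T s ν c x) ^ 2 ∂haarAddCircle := by
  have hrot (θ : ℝ) := integral_ρ_mul_trigPoly_sq_le (c := c) hν fun i hi =>
    calc _ ≤ |(ν i - ω) * (θ / ω)| := norm_fourier_sub_exp_le (T := T) (ν i) hω θ
      _ = |ν i - ω| * |θ / ω| := abs_mul _ _
      _ ≤ ℓ * |θ / ω| := by gcongr; exact hνω i hi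
  simp only [mul_pow, sq_abs] at hrot
  have hquarter := hrot (π / 2)
  have hneg := hrot (-π / 2)
  have hhalf := hrot π
  push_cast at hquarter hneg
  rw [Complex.exp_pi_div_two_mul_I] at hquarter
  rw [Complex.exp_neg_pi_div_two_mul_I] at hneg
  rw [Complex.exp_pi_mul_I] at hhalf
  have hsum := four_thirds_mul_integral_norm_sq_le ((trigPoly T s ν c).memLp haarAddCircle ℂ)
  linear_combination hsum + hquarter + hneg + hhalf

end TrigPoly

section CircleAvg

local instance fact_two_pi_pos : Fact (0 < 2 * π) := ⟨Real.two_pi_pos⟩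

lemma circleAvg_coe (f : AddCircle (2 * π) → ℝ) :
    circleAvg (fun t => f t) = ∫ x, f x ∂AddCircle.haarAddCircle := by
  rw [circleAvg, AddCircle.integral_haarAddCircle, ← AddCircle.intervalIntegral_preimage _ 0,
    zero_add, one_div, smul_eq_mul]

lemma trigPoly_two_pi_coe {ι : Type*} (s : Finset ι) (ν : ι → ℤ) (c : ι → ℂ) (t : ℝ) :
    trigPoly (2 * π) s ν c t = ∑ i ∈ s, c i * Complex.exp (ν i * t * Complex.I) := by
  rw [trigPoly_apply]
  refine Finset.sum_congr rfl fun i _ => ?_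
  rw [fourier_coe_apply]
  congr 2
  push_cast
  field_simp

theorem stmt10_general {ι : Type*} (s : Finset ι) {ν : ι → ℤ} (hν : Function.Injective ν)
    (c : ι → ℂ) {ω ℓ : ℝ} (hω : ω ≠ 0) (hνω : ∀ i ∈ s, |ν i - ω| ≤ ℓ)
    (hℓ : 27 * ℓ ^ 2 ≤ ω ^ 2) :
    circleAvg (fun t => ‖∑ i ∈ s, c i * Complex.exp (ν i * t * Complex.I)‖ ^ 2) ≤
      32 * circleAvg (fun t => ρ (∑ i ∈ s, c i * Complex.exp (ν i * t * Complex.I)) ^ 2) := by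
  simp only [← trigPoly_two_pi_coe]
  rw [circleAvg_coe (fun x => ‖trigPoly (2 * π) s ν c x‖ ^ 2),
    circleAvg_coe (fun x => ρ (trigPoly (2 * π) s ν c x) ^ 2)]
  have hquant := mul_integral_norm_trigPoly_sq_le (T := 2 * π) (c := c) hν hω hνω
  -- 27 is the least integer `k` with `3π²/k ≤ 4/3 - 7/32`.
  have hcoeff : 7 / 32 ≤ 4 / 3 - 3 * π ^ 2 * (ℓ / ω) ^ 2 := by
    have hratio : (ℓ / ω) ^ 2 ≤ 1 / 27 := by
      rw [div_pow, div_le_div_iff₀ (by positivity) (by norm_num)]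
      linarith
    have hπ : 3 * π ^ 2 * (ℓ / ω) ^ 2 ≤ 3 * 3.15 ^ 2 * (1 / 27) := by
      gcongr
      exact Real.pi_lt_d2.le
    linarith
  have hnonneg : 0 ≤ ∫ x, ‖trigPoly (2 * π) s ν c x‖ ^ 2 ∂AddCircle.haarAddCircle :=
    integral_nonneg fun x => sq_nonneg _
  linarith [mul_le_mul_of_nonneg_right hcoeff hnonneg]

end CircleAvg

/-- **High-frequency estimate.** If `N, L ≥ 1` satisfy `1343 L² ≤ N²` and
`P(t) = Σ_{m=0}^{L−1} b_m e^{i(N+m)t}`, then `‖P‖²_{L²(S¹)} ≤ 32 ‖ρ ∘ P‖²_{L²(S¹)}`. -/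
theorem stmt10 (N L : ℕ) (hN : 1 ≤ N) (hL : 1 ≤ L) (hNL : 1343 * L ^ 2 ≤ N ^ 2)
    (b : ℕ → ℂ) :
    circleAvg (fun t =>
        ‖∑ m ∈ Finset.range L, b m * Complex.exp (((N + m : ℕ) : ℂ) * (t : ℂ) * Complex.I)‖ ^ 2)
      ≤ 32 * circleAvg (fun t =>
          (ρ (∑ m ∈ Finset.range L,
            b m * Complex.exp (((N + m : ℕ) : ℂ) * (t : ℂ) * Complex.I))) ^ 2) := by
  have hband : ∀ m ∈ Finset.range L, |((N + m : ℤ) : ℝ) - N| ≤ L := fun m hm => by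
    simpa using (Finset.mem_range.1 hm).le
  have hgap : 27 * (L : ℝ) ^ 2 ≤ (N : ℝ) ^ 2 := by exact_mod_cast (by lia : 27 * L ^ 2 ≤ N ^ 2)
  simpa using stmt10_general _ (fun m n h => by simpa using h) b (by positivity) hband hgap
end
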